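/- Stability of SpaceSaving under neighboring inputs: let (T, C) and (T', C') be the terminal outputs of SpaceSaving with capacity k on neighboring streams X and X' (X' obtained from X by removing one update). Then |T \ T'| ≤ 2 and |T' \ T| ≤ 2 (so |T ∩ T'| ≥ k − 2 when the tables are full); every item in the symmetric difference has counter value (in the run where it is tracked) at most min_{a∈T'} C'[a] + 1; and there exists at most one item x ∈ T ∩ T' with C[x] = C'[x] + 1, while C[y] = C'[y] for every other item y ∈ T ∩ T'. -/

import Mathlib

/-- State of the SpaceSaving algorithm: tracked set, counters (0 for untracked
items), and recency (last occurrence time, 0 if never seen). -/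
structure SSState (α : Type) where
  tracked : Finset α
  count : α → ℕ
  recency : α → ℕ

variable {α : Type} [LinearOrder α]

/-- The set of tracked items of minimum counter value. -/
def ssMinSet (s : SSState α) : Finset α :=
  s.tracked.filter (fun a => ∀ b ∈ s.tracked, s.count a ≤ s.count b)

/-- The eviction victim: among tracked items of minimum counter value, the one
with the largest recency (ties in recency broken by the order on `α`). -/
def ssEvict (s : SSState α) : Option α :=
  if h : ((ssMinSet s).filter (fun a => ∀ b ∈ ssMinSet s, s.recency b ≤ s.recency a)).Nonempty
  then some (((ssMinSet s).filter (fun a => ∀ b ∈ ssMinSet s, s.recency b ≤ s.recency a)).max' h)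
  else none

/-- One step of SpaceSaving with capacity `k` at time `t`; a `none` update
contributes nothing. -/
def ssStep (k t : ℕ) (s : SSState α) : Option α → SSState α
  | none => s
  | some x =>
    if x ∈ s.tracked then
      ⟨s.tracked, Function.update s.count x (s.count x + 1), Function.update s.recency x t⟩
    else if s.tracked.card < k then
      ⟨insert x s.tracked, Function.update s.count x 1, Function.update s.recency x t⟩
    else
      match ssEvict s with
      | none => s
      | some y =>
        ⟨insert x (s.tracked.erase y),
         Function.update (Function.update s.count y 0) x (s.count y + 1),
         Function.update s.recency x t⟩

def ssRunAux (k : ℕ) : SSState α → ℕ → List (Option α) → SSState α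
  | s, _, [] => s
  | s, t, x :: xs => ssRunAux k (ssStep k t s x) (t + 1) xs

/-- Run SpaceSaving with capacity `k` on a stream (positions are 1-indexed). -/
def ssRun (k : ℕ) (X : List (Option α)) : SSState α :=
  ssRunAux k ⟨∅, fun _ => 0, fun _ => 0⟩ 1 X

/-- Consistency of a state reached before time `t`: the table has at most `k` entries, tracked
counters are positive, and recencies of tracked items are distinct and lie before `t`. -/
structure SSState.WF (k t : ℕ) (s : SSState α) : Prop where
  card_le : s.tracked.card ≤ k
  count_pos : ∀ a ∈ s.tracked, 1 ≤ s.count a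
  recency_lt : ∀ a ∈ s.tracked, s.recency a < t
  recency_inj : ∀ a ∈ s.tracked, ∀ b ∈ s.tracked, s.recency a = s.recency b → a = b

/-- `e` is the most recent tracked item of minimum counter value. -/
structure SSState.Victim (s : SSState α) (e : α) : Prop where
  mem : e ∈ s.tracked
  count_le : ∀ b ∈ s.tracked, s.count e ≤ s.count b
  recency_lt : ∀ b ∈ s.tracked, s.count b = s.count e → b ≠ e → s.recency b < s.recency e

theorem mem_ssMinSet {s : SSState α} {a : α} :
    a ∈ ssMinSet s ↔ a ∈ s.tracked ∧ ∀ b ∈ s.tracked, s.count a ≤ s.count b := by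
  simp [ssMinSet]

theorem ssEvict_eq_some {k t : ℕ} {s : SSState α} (hs : s.WF k t) (hne : s.tracked.Nonempty) :
    ∃ e, ssEvict s = some e ∧ s.Victim e := by
  have hmin : (ssMinSet s).Nonempty := by
    obtain ⟨a, ha, h⟩ := s.tracked.exists_min_image s.count hne
    exact ⟨a, mem_ssMinSet.mpr ⟨ha, h⟩⟩
  have hrec : ((ssMinSet s).filter
      (fun a => ∀ b ∈ ssMinSet s, s.recency b ≤ s.recency a)).Nonempty := by
    obtain ⟨a, ha, h⟩ := (ssMinSet s).exists_max_image s.recency hmin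
    exact ⟨a, Finset.mem_filter.mpr ⟨ha, h⟩⟩
  refine ⟨_, dif_pos hrec, ?_⟩
  have hmem := Finset.max'_mem _ hrec
  generalize Finset.max' _ hrec = e at hmem
  rw [Finset.mem_filter, mem_ssMinSet] at hmem
  obtain ⟨⟨he, hle⟩, hr⟩ := hmem
  refine ⟨he, hle, fun b hb hbe hne => lt_of_le_of_ne (hr b (mem_ssMinSet.mpr ⟨hb, ?_⟩)) ?_⟩
  · simpa [hbe] using hle
  · exact fun h => hne (hs.recency_inj b hb e he h)

/-- Pointwise description of one update of SpaceSaving: a hit, an insertion into a table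
with a free slot, or an eviction. -/
inductive SSState.Step (k : ℕ) (s : SSState α) (z : α) (s₁ : SSState α) : Prop
  | hit (mem : z ∈ s.tracked) (tracked : ∀ a, a ∈ s₁.tracked ↔ a ∈ s.tracked)
      (card : s₁.tracked.card = s.tracked.card)
      (count : ∀ a, s₁.count a = if a = z then s.count z + 1 else s.count a)
  | free (not_mem : z ∉ s.tracked) (card_lt : s.tracked.card < k)
      (tracked : ∀ a, a ∈ s₁.tracked ↔ a = z ∨ a ∈ s.tracked)
      (card : s₁.tracked.card = s.tracked.card + 1)
      (count : ∀ a, s₁.count a = if a = z then 1 else s.count a)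
  | evict (e : α) (not_mem : z ∉ s.tracked) (card_ge : s.tracked.card = k)
      (victim : s.Victim e)
      (tracked : ∀ a, a ∈ s₁.tracked ↔ a = z ∨ (a ∈ s.tracked ∧ a ≠ e))
      (card : s₁.tracked.card = s.tracked.card)
      (count : ∀ a, s₁.count a =
        if a = z then s.count e + 1 else if a = e then 0 else s.count a)

theorem ssStep_spec {k t : ℕ} (hk : 1 ≤ k) {s : SSState α} (hs : s.WF k t) (z : α) :
    s.Step k z (ssStep k t s (some z)) ∧
      (ssStep k t s (some z)).recency = Function.update s.recency z t := by
  by_cases hz : z ∈ s.tracked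
  · simp only [ssStep, hz, if_true, and_true]
    exact .hit hz (by simp) rfl (by simp [Function.update_apply])
  by_cases hc : s.tracked.card < k
  · simp only [ssStep, hz, hc, if_true, if_false, and_true]
    exact .free hz hc (by simp) (by simp [hz]) (by simp [Function.update_apply])
  have hcard : s.tracked.card = k := le_antisymm hs.card_le (not_lt.mp hc)
  obtain ⟨e, he, hv⟩ := ssEvict_eq_some hs (Finset.card_pos.mp (by omega))
  simp only [ssStep, hz, hc, if_false, he, and_true]
  refine .evict e hz hcard hv (by simp [and_comm]) ?_ (by simp [Function.update_apply])
  have hpos : 0 < s.tracked.card := by omega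
  rw [Finset.card_insert_of_notMem (by simp [hz]), Finset.card_erase_of_mem hv.mem]
  omega

theorem SSState.WF.step {k t : ℕ} (hk : 1 ≤ k) {s : SSState α} (hs : s.WF k t) (z : α) :
    (ssStep k t s (some z)).WF k (t + 1) := by
  obtain ⟨hstep, hrec⟩ := ssStep_spec hk hs z
  generalize ssStep k t s (some z) = s₁ at hstep hrec
  obtain ⟨h1, h2, h3, h4⟩ := hs
  have hr : ∀ a, s₁.recency a = if a = z then t else s.recency a := by
    simp [hrec, Function.update_apply]
  clear hrec
  cases hstep <;> constructor <;> grind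

theorem ssRunAux_wf {k : ℕ} (hk : 1 ≤ k) (L : List α) :
    ∀ {s : SSState α} {t : ℕ}, s.WF k t →
      (ssRunAux k s t (L.map some)).WF k (t + L.length) := by
  induction L with
  | nil => intro s t hs; exact hs
  | cons a L ih =>
    intro s t hs
    have := ih (hs.step hk a)
    simpa [ssRunAux, add_assoc, add_comm 1] using this

theorem ssRunAux_append (k : ℕ) (L M : List (Option α)) :
    ∀ (s : SSState α) (t : ℕ),
      ssRunAux k s t (L ++ M) = ssRunAux k (ssRunAux k s t L) (t + L.length) M := by
  induction L with
  | nil => intro s t; rfl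
  | cons a L ih =>
    intro s t
    simp [ssRunAux, ih, add_assoc, add_comm 1]

/-- Relabeling recencies by a strictly monotone function commutes with a step. -/
theorem ssStep_map_recency {f : ℕ → ℕ} (hf : StrictMono f) (k t : ℕ) (s : SSState α)
    (o : Option α) :
    ssStep k (f t) ⟨s.tracked, s.count, f ∘ s.recency⟩ o =
      ⟨(ssStep k t s o).tracked, (ssStep k t s o).count, f ∘ (ssStep k t s o).recency⟩ := by
  cases o with
  | none => rfl
  | some z =>
    have hmin : ssMinSet ⟨s.tracked, s.count, f ∘ s.recency⟩ = ssMinSet s := rfl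
    have hev : ssEvict ⟨s.tracked, s.count, f ∘ s.recency⟩ = ssEvict s := by
      simp only [ssEvict, hmin, Function.comp_apply, hf.le_iff_le]
    simp only [ssStep, hev]
    split_ifs
    · simp [Function.comp_update]
    · simp [Function.comp_update]
    · cases ssEvict s <;> simp [Function.comp_update]

/-- Delaying a run by one time unit does not change its tracked set and counters. -/
theorem ssRunAux_delay {f : ℕ → ℕ} (hf : StrictMono f) (k : ℕ) (L : List (Option α)) :
    ∀ (s : SSState α) (t : ℕ), (∀ r, t ≤ r → f r = r + 1) →
      ssRunAux k ⟨s.tracked, s.count, f ∘ s.recency⟩ (t + 1) L =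
        ⟨(ssRunAux k s t L).tracked, (ssRunAux k s t L).count,
          f ∘ (ssRunAux k s t L).recency⟩ := by
  induction L with
  | nil => intro s t _; rfl
  | cons a L ih =>
    intro s t ht
    simp only [ssRunAux]
    rw [← ih _ _ fun r hr => ht r (by omega), ← ssStep_map_recency hf, ht t le_rfl]

theorem ssRunAux_succ_time {k t : ℕ} {s : SSState α}
    (hrec : ∀ a, s.recency a < t) (L : List (Option α)) :
    (ssRunAux k s (t + 1) L).tracked = (ssRunAux k s t L).tracked ∧
      (ssRunAux k s (t + 1) L).count = (ssRunAux k s t L).count := by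
  have hf : StrictMono fun r : ℕ => if r < t then r else r + 1 := by
    intro a b hab
    grind
  have h := ssRunAux_delay hf k L s t fun r hr => by grind
  have hs : (fun r : ℕ => if r < t then r else r + 1) ∘ s.recency = s.recency := by
    funext a
    simp [hrec a]
  rw [hs] at h
  have htracked := congrArg SSState.tracked h
  have hcount := congrArg SSState.count h
  exact ⟨htracked, hcount⟩

theorem ssStep_recency_lt {k t : ℕ} {s : SSState α} (h : ∀ a, s.recency a < t)
    (o : Option α) (a : α) : (ssStep k t s o).recency a < t + 1 := by
  have := h a
  cases o with
  | none => exact this.trans (Nat.lt_succ_self t)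
  | some z =>
    simp only [ssStep]
    split_ifs
    · grind [Function.update_apply]
    · grind [Function.update_apply]
    · cases ssEvict s <;> grind [Function.update_apply]

theorem ssRunAux_recency_lt {k : ℕ} (L : List (Option α)) :
    ∀ {s : SSState α} {t : ℕ}, (∀ a, s.recency a < t) →
      ∀ a, (ssRunAux k s t L).recency a < t + L.length := by
  induction L with
  | nil => intro s t h; exact h
  | cons o L ih =>
    intro s t h a
    have := ih (ssStep_recency_lt (k := k) h o) a
    simpa [ssRunAux, add_assoc, add_comm 1] using this

/-- Same tracked sets; the counters differ only at `x`, by one. -/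
structure OffByOne (s s' : SSState α) (x : α) : Prop where
  mem_iff : ∀ a, a ∈ s.tracked ↔ a ∈ s'.tracked
  card_eq : s.tracked.card = s'.tracked.card
  mem : x ∈ s.tracked
  count_self : s.count x = s'.count x + 1
  count : ∀ a ∈ s.tracked, a ≠ x → s.count a = s'.count a
  recency : ∀ a ∈ s.tracked, a ≠ x → s.recency a = s'.recency a

/-- The first run tracks one extra item `x`, of counter `1`. -/
structure ExtraItem (s s' : SSState α) (x : α) : Prop where
  mem_iff : ∀ a, a ∈ s.tracked ↔ a = x ∨ a ∈ s'.tracked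
  card_eq : s.tracked.card = s'.tracked.card + 1
  not_mem : x ∉ s'.tracked
  count_self : s.count x = 1
  count : ∀ a ∈ s'.tracked, s.count a = s'.count a
  recency : ∀ a ∈ s'.tracked, s.recency a = s'.recency a

/-- Full tables; the next victim `y` of the second run is replaced by `x` in the first run,
with a counter larger by one. -/
structure VictimSwapped (k : ℕ) (s s' : SSState α) (x y : α) : Prop where
  card : s.tracked.card = k
  card' : s'.tracked.card = k
  mem_iff : ∀ a, a ≠ x → a ≠ y → (a ∈ s.tracked ↔ a ∈ s'.tracked)
  mem : x ∈ s.tracked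
  not_mem : x ∉ s'.tracked
  not_mem' : y ∉ s.tracked
  victim : s'.Victim y
  count_self : s.count x = s'.count y + 1
  count : ∀ a ∈ s.tracked, a ≠ x → s.count a = s'.count a
  recency : ∀ a ∈ s.tracked, a ≠ x → s.recency a = s'.recency a

/-- Full tables; `w` in the first run stands for the more recent `y` in the second run, both of
minimum counter, and the counter of the common item `x` is off by one. -/
structure OffByOneSwapped (k : ℕ) (s s' : SSState α) (x w y : α) : Prop where
  card : s.tracked.card = k
  card' : s'.tracked.card = k
  mem_iff : ∀ a, a ≠ w → a ≠ y → (a ∈ s.tracked ↔ a ∈ s'.tracked)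
  mem : x ∈ s.tracked
  mem' : x ∈ s'.tracked
  mem_left : w ∈ s.tracked
  not_mem_left : w ∉ s'.tracked
  mem_right : y ∈ s'.tracked
  not_mem_right : y ∉ s.tracked
  count_min : ∀ a ∈ s'.tracked, s'.count y ≤ s'.count a
  count_left : s.count w = s'.count y
  count_self : s.count x = s'.count x + 1
  count : ∀ a ∈ s.tracked, a ≠ x → a ≠ w → s.count a = s'.count a
  recency : ∀ a ∈ s.tracked, a ≠ x → a ≠ w → s.recency a = s'.recency a
  recency_lt : ∀ a ∈ s.tracked, s.count a = s'.count y → s.recency a < s'.recency y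

/-- Full tables; `w` and `x` in the first run stand for `y` and `v` in the second run. All have
minimum counter, except that the counter of `x` is larger by one, and `y` and `v` are more recent
than every item of minimum counter in the first run. -/
structure DoublySwapped (k : ℕ) (s s' : SSState α) (x w y v : α) : Prop where
  card : s.tracked.card = k
  card' : s'.tracked.card = k
  mem_iff : ∀ a, a ≠ x → a ≠ w → a ≠ y → a ≠ v → (a ∈ s.tracked ↔ a ∈ s'.tracked)
  ne_left : x ≠ w
  ne_right : y ≠ v
  mem_x : x ∈ s.tracked
  not_mem_x : x ∉ s'.tracked
  mem_w : w ∈ s.tracked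
  not_mem_w : w ∉ s'.tracked
  mem_y : y ∈ s'.tracked
  not_mem_y : y ∉ s.tracked
  mem_v : v ∈ s'.tracked
  not_mem_v : v ∉ s.tracked
  count_min : ∀ a ∈ s'.tracked, s'.count y ≤ s'.count a
  count_v : s'.count v = s'.count y
  count_w : s.count w = s'.count y
  count_x : s.count x = s'.count y + 1
  count : ∀ a ∈ s.tracked, a ≠ x → a ≠ w → s.count a = s'.count a
  recency : ∀ a ∈ s.tracked, a ≠ x → a ≠ w → s.recency a = s'.recency a
  recency_lt_y : ∀ a ∈ s.tracked, s.count a = s'.count y → s.recency a < s'.recency y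
  recency_lt_v : ∀ a ∈ s.tracked, s.count a = s'.count y → s.recency a < s'.recency v

/-- The relation between two runs of which the first has received one additional update. -/
inductive Neighboring (k : ℕ) (s s' : SSState α) : Prop
  | offByOne (x : α) (h : OffByOne s s' x)
  | extraItem (x : α) (h : ExtraItem s s' x)
  | victimSwapped (x y : α) (h : VictimSwapped k s s' x y)
  | offByOneSwapped (x w y : α) (h : OffByOneSwapped k s s' x w y)
  | doublySwapped (x w y v : α) (h : DoublySwapped k s s' x w y v)

section Transition

variable {k t : ℕ} {s s' s₁ s₁' : SSState α} {z : α}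

theorem OffByOne.step {x : α} (h : OffByOne s s' x)
    (hs : s.WF k t) (hs' : s'.WF k t) (hstep : s.Step k z s₁) (hstep' : s'.Step k z s₁')
    (hrec : s₁.recency = Function.update s.recency z t)
    (hrec' : s₁'.recency = Function.update s'.recency z t) : Neighboring k s₁ s₁' := by
  have hr : ∀ a, s₁.recency a = if a = z then t else s.recency a := by
    simp [hrec, Function.update_apply]
  have hr' : ∀ a, s₁'.recency a = if a = z then t else s'.recency a := by
    simp [hrec', Function.update_apply]
  clear hrec hrec'
  obtain ⟨m1, m2, m3, m4, m5, m6⟩ := h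
  obtain ⟨-, -, l1, -⟩ := hs
  obtain ⟨-, -, l2, -⟩ := hs'
  cases hstep with
  | hit a1 a2 a3 a4 =>
    cases hstep' with
    | hit => exact .offByOne x (by constructor <;> grind +splitImp)
    | free => grind +splitImp
    | evict => grind +splitImp
  | free a1 a2 a3 a4 a5 =>
    cases hstep' with
    | hit => grind +splitImp
    | free => exact .offByOne x (by constructor <;> grind +splitImp)
    | evict => grind +splitImp
  | evict e a1 a2 a3 a4 a5 a6 =>
    cases hstep' with
    | hit => grind +splitImp
    | free => grind +splitImp
    | evict e' b1 b2 b3 b4 b5 b6 =>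
      obtain ⟨c1, c2, c3⟩ := a3
      obtain ⟨d1, d2, d3⟩ := b3
      by_cases hee : e = e'
      · subst hee
        by_cases hex : e = x
        · exact .offByOne z (by constructor <;> grind +splitImp)
        · exact .offByOne x (by constructor <;> grind +splitImp)
      obtain rfl : e' = x := by
        by_contra hne
        grind +splitImp
      by_cases hc : s.count e = s'.count e'
      · exact .victimSwapped e' e (by constructor <;> first | (constructor <;> grind +splitImp) | grind +splitImp)
      · have hc' : s.count e = s'.count e' + 1 := by grind +splitImp
        exact .offByOneSwapped z e' e (by constructor <;> grind +splitImp)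

theorem ExtraItem.step {x : α} (h : ExtraItem s s' x)
    (hs : s.WF k t) (hs' : s'.WF k t) (hstep : s.Step k z s₁) (hstep' : s'.Step k z s₁')
    (hrec : s₁.recency = Function.update s.recency z t)
    (hrec' : s₁'.recency = Function.update s'.recency z t) : Neighboring k s₁ s₁' := by
  have hr : ∀ a, s₁.recency a = if a = z then t else s.recency a := by
    simp [hrec, Function.update_apply]
  have hr' : ∀ a, s₁'.recency a = if a = z then t else s'.recency a := by
    simp [hrec', Function.update_apply]
  clear hrec hrec'
  obtain ⟨m1, m2, m3, m4, m5, m6⟩ := h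
  obtain ⟨l0, l3, l1, -⟩ := hs
  obtain ⟨-, -, l2, -⟩ := hs'
  cases hstep with
  | hit a1 a2 a3 a4 =>
    cases hstep' with
    | hit => exact .extraItem x (by constructor <;> grind +splitImp)
    | free => exact .offByOne x (by constructor <;> grind +splitImp)
    | evict => grind +splitImp
  | free a1 a2 a3 a4 a5 =>
    cases hstep' with
    | hit => grind +splitImp
    | free => exact .extraItem x (by constructor <;> grind +splitImp)
    | evict => grind +splitImp
  | evict e a1 a2 a3 a4 a5 a6 =>
    obtain ⟨c1, c2, c3⟩ := a3
    cases hstep' with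
    | hit => grind +splitImp
    | free b1 b2 b3 b4 b5 =>
      have hc : s.count e = 1 := by grind +splitImp
      by_cases hex : e = x
      · exact .offByOne z (by constructor <;> grind +splitImp)
      · exact .offByOneSwapped z x e (by constructor <;> grind +splitImp)
    | evict => grind +splitImp

theorem VictimSwapped.step {x y : α} (h : VictimSwapped k s s' x y)
    (hs : s.WF k t) (hs' : s'.WF k t) (hstep : s.Step k z s₁) (hstep' : s'.Step k z s₁')
    (hrec : s₁.recency = Function.update s.recency z t)
    (hrec' : s₁'.recency = Function.update s'.recency z t) : Neighboring k s₁ s₁' := by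
  have hr : ∀ a, s₁.recency a = if a = z then t else s.recency a := by
    simp [hrec, Function.update_apply]
  have hr' : ∀ a, s₁'.recency a = if a = z then t else s'.recency a := by
    simp [hrec', Function.update_apply]
  clear hrec hrec'
  obtain ⟨m1, m2, m3, m4, m5, m6, ⟨v1, v2, v3⟩, m7, m8, m9⟩ := h
  obtain ⟨-, -, l1, -⟩ := hs
  obtain ⟨-, -, l2, -⟩ := hs'
  cases hstep with
  | hit a1 a2 a3 a4 =>
    cases hstep' with
    | hit =>
      exact .victimSwapped x y (by constructor <;> first | (constructor <;> grind +splitImp) | grind +splitImp)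
    | free => grind +splitImp
    | evict e' b1 b2 b3 b4 b5 b6 =>
      obtain ⟨d1, d2, d3⟩ := b3
      obtain rfl : e' = y := by
        by_contra hne
        grind +splitImp
      exact .offByOne x (by constructor <;> grind +splitImp)
  | free => grind +splitImp
  | evict e a1 a2 a3 a4 a5 a6 =>
    obtain ⟨c1, c2, c3⟩ := a3
    have hclaim : (s'.count y = s.count e ∧ e ≠ x) ∨ s.count e = s'.count y + 1 := by grind +splitImp
    cases hstep' with
    | hit =>
      obtain rfl : z = y := by grind +splitImp
      rcases hclaim with ⟨hc, hex⟩ | hc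
      · exact .victimSwapped x e (by constructor <;> first | (constructor <;> grind +splitImp) | grind +splitImp)
      · by_cases hex : e = x
        · exact .offByOne z (by constructor <;> grind +splitImp)
        · exact .offByOneSwapped z x e (by constructor <;> grind +splitImp)
    | free => grind +splitImp
    | evict e' b1 b2 b3 b4 b5 b6 =>
      obtain ⟨d1, d2, d3⟩ := b3
      obtain rfl : e' = y := by
        by_contra hne
        grind +splitImp
      rcases hclaim with ⟨hc, hex⟩ | hc
      · exact .victimSwapped x e (by constructor <;> first | (constructor <;> grind +splitImp) | grind +splitImp)
      · by_cases hex : e = x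
        · exact .offByOne z (by constructor <;> grind +splitImp)
        · exact .offByOneSwapped z x e (by constructor <;> grind +splitImp)

set_option maxHeartbeats 1000000 in
theorem OffByOneSwapped.step {x w y : α} (h : OffByOneSwapped k s s' x w y)
    (hs : s.WF k t) (hs' : s'.WF k t) (hstep : s.Step k z s₁) (hstep' : s'.Step k z s₁')
    (hrec : s₁.recency = Function.update s.recency z t)
    (hrec' : s₁'.recency = Function.update s'.recency z t) : Neighboring k s₁ s₁' := by
  have hr : ∀ a, s₁.recency a = if a = z then t else s.recency a := by
    simp [hrec, Function.update_apply]
  have hr' : ∀ a, s₁'.recency a = if a = z then t else s'.recency a := by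
    simp [hrec', Function.update_apply]
  clear hrec hrec'
  obtain ⟨m1, m2, m3, m4, m5, m6, m7, m8, m9, n1, n2, n3, n4, n5, n6⟩ := h
  obtain ⟨-, -, l1, -⟩ := hs
  obtain ⟨-, -, l2, -⟩ := hs'
  cases hstep with
  | hit a1 a2 a3 a4 =>
    cases hstep' with
    | hit => exact .offByOneSwapped x w y (by constructor <;> grind +splitImp)
    | free => grind +splitImp
    | evict e' b1 b2 b3 b4 b5 b6 =>
      obtain ⟨d1, d2, d3⟩ := b3
      obtain rfl : z = w := by grind +splitImp
      by_cases hey : e' = y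
      · exact .offByOne x (by constructor <;> grind +splitImp)
      · obtain rfl : e' = x := by
          by_contra hne
          grind +splitImp
        exact .victimSwapped e' y
          (by constructor <;> first | (constructor <;> grind +splitImp) | grind +splitImp)
  | free => grind +splitImp
  | evict e a1 a2 a3 a4 a5 a6 =>
    obtain ⟨c1, c2, c3⟩ := a3
    have hc : s.count e = s'.count y := by grind +splitImp
    have hex : e ≠ x := by grind +splitImp
    cases hstep' with
    | hit =>
      obtain rfl : z = y := by grind +splitImp
      by_cases hew : e = w
      · exact .offByOne x (by constructor <;> grind +splitImp)
      · exact .offByOneSwapped x w e (by constructor <;> grind +splitImp)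
    | free => grind +splitImp
    | evict e' b1 b2 b3 b4 b5 b6 =>
      obtain ⟨d1, d2, d3⟩ := b3
      by_cases hey : e' = y
      · by_cases hew : e = w
        · exact .offByOne x (by constructor <;> grind +splitImp)
        · exact .offByOneSwapped x w e (by constructor <;> grind +splitImp)
      · obtain rfl : e' = x := by
          by_contra hne
          grind +splitImp
        by_cases hew : e = w
        · exact .victimSwapped e' y
            (by constructor <;> first | (constructor <;> grind +splitImp) | grind +splitImp)
        · exact .doublySwapped e' w y e (by constructor <;> grind +splitImp)

theorem DoublySwapped.symm {x w y v : α} (h : DoublySwapped k s s' x w y v) :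
    DoublySwapped k s s' x w v y := by
  obtain ⟨m1, m2, m3, m4, m5, m6, m7, m8, m9, n1, n2, n3, n4, n5, n6, n7, n8, n9, o1, o2, o3⟩ := h
  constructor <;> grind +splitImp

set_option maxHeartbeats 1000000 in
theorem DoublySwapped.step_of_mem {x w y v : α} (h : DoublySwapped k s s' x w y v)
    (hs : s.WF k t) (hs' : s'.WF k t) (hstep : s.Step k z s₁) (hstep' : s'.Step k z s₁')
    (hrec : s₁.recency = Function.update s.recency z t)
    (hrec' : s₁'.recency = Function.update s'.recency z t)
    (hv : v ∈ s₁'.tracked) (hvz : v ≠ z) : Neighboring k s₁ s₁' := by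
  have hr : ∀ a, s₁.recency a = if a = z then t else s.recency a := by
    simp [hrec, Function.update_apply]
  have hr' : ∀ a, s₁'.recency a = if a = z then t else s'.recency a := by
    simp [hrec', Function.update_apply]
  clear hrec hrec'
  obtain ⟨m1, m2, m3, m4, m5, m6, m7, m8, m9, n1, n2, n3, n4, n5, n6, n7, n8, n9, o1, o2, o3⟩ := h
  obtain ⟨-, -, l1, -⟩ := hs
  obtain ⟨-, -, l2, -⟩ := hs'
  cases hstep with
  | hit a1 a2 a3 a4 =>
    cases hstep' with
    | hit => exact .doublySwapped x w y v (by constructor <;> grind +splitImp)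
    | free => grind +splitImp
    | evict e' b1 b2 b3 b4 b5 b6 =>
      obtain ⟨d1, d2, d3⟩ := b3
      obtain rfl : e' = y := by
        by_contra hne
        grind +splitImp
      by_cases hzw : z = w
      · exact .victimSwapped x v (by constructor <;> first | (constructor <;> grind +splitImp) | grind +splitImp)
      · obtain rfl : z = x := by grind +splitImp
        exact .offByOneSwapped z w v (by constructor <;> grind +splitImp)
  | free => grind +splitImp
  | evict e a1 a2 a3 a4 a5 a6 =>
    obtain ⟨c1, c2, c3⟩ := a3
    have hc : s.count e = s'.count y := by
      refine le_antisymm (by grind) ?_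
      by_cases hex : e = x
      · grind
      by_cases hew : e = w
      · grind
      rw [n9 e c1 hex hew]
      exact n5 e ((m3 e hex hew (by grind) (by grind)).mp c1)
    have hex : e ≠ x := by grind +splitImp
    cases hstep' with
    | hit =>
      obtain rfl : z = y := by grind +splitImp
      by_cases hew : e = w
      · exact .victimSwapped x v (by constructor <;> first | (constructor <;> grind +splitImp) | grind +splitImp)
      · exact .doublySwapped x w v e (by constructor <;> grind +splitImp)
    | free => grind +splitImp
    | evict e' b1 b2 b3 b4 b5 b6 =>
      obtain ⟨d1, d2, d3⟩ := b3
      obtain rfl : e' = y := by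
        by_contra hne
        grind +splitImp
      by_cases hew : e = w
      · exact .victimSwapped x v (by constructor <;> first | (constructor <;> grind +splitImp) | grind +splitImp)
      · exact .doublySwapped x w v e (by constructor <;> grind +splitImp)

theorem DoublySwapped.step {x w y v : α} (h : DoublySwapped k s s' x w y v)
    (hs : s.WF k t) (hs' : s'.WF k t) (hstep : s.Step k z s₁) (hstep' : s'.Step k z s₁')
    (hrec : s₁.recency = Function.update s.recency z t)
    (hrec' : s₁'.recency = Function.update s'.recency z t) : Neighboring k s₁ s₁' := by
  by_cases hv : v ∈ s₁'.tracked ∧ v ≠ z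
  · exact h.step_of_mem hs hs' hstep hstep' hrec hrec' hv.1 hv.2
  · have hy : y ∈ s₁'.tracked ∧ y ≠ z := by
      have h1 := h.mem_y
      have h2 := h.mem_v
      have h3 := h.ne_right
      cases hstep' <;> grind +splitImp
    exact h.symm.step_of_mem hs hs' hstep hstep' hrec hrec' hy.1 hy.2

theorem Neighboring.step (hk : 1 ≤ k) (h : Neighboring k s s') (hs : s.WF k t)
    (hs' : s'.WF k t) (z : α) :
    Neighboring k (ssStep k t s (some z)) (ssStep k t s' (some z)) := by
  obtain ⟨hstep, hrec⟩ := ssStep_spec hk hs z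
  obtain ⟨hstep', hrec'⟩ := ssStep_spec hk hs' z
  cases h with
  | offByOne _ h => exact h.step hs hs' hstep hstep' hrec hrec'
  | extraItem _ h => exact h.step hs hs' hstep hstep' hrec hrec'
  | victimSwapped _ _ h => exact h.step hs hs' hstep hstep' hrec hrec'
  | offByOneSwapped _ _ _ h => exact h.step hs hs' hstep hstep' hrec hrec'
  | doublySwapped _ _ _ _ h => exact h.step hs hs' hstep hstep' hrec hrec'

theorem SSState.WF.neighboring_step (hk : 1 ≤ k) (hs : s.WF k t) (x : α) :
    Neighboring k (ssStep k t s (some x)) s := by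
  obtain ⟨hstep, hrec⟩ := ssStep_spec hk hs x
  generalize ssStep k t s (some x) = s₁ at hstep hrec
  have hr : ∀ a, a ≠ x → s₁.recency a = s.recency a := by
    simp +contextual [hrec]
  clear hrec
  cases hstep with
  | hit => exact .offByOne x (by constructor <;> grind +splitImp)
  | free => exact .extraItem x (by constructor <;> grind +splitImp)
  | evict e _ _ hv =>
    have := hv.mem
    exact .victimSwapped x e (by constructor <;> grind +splitImp)

theorem Neighboring.run (hk : 1 ≤ k) (B : List α) :
    ∀ {s s' : SSState α} {t : ℕ}, Neighboring k s s' → s.WF k t → s'.WF k t →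
      Neighboring k (ssRunAux k s t (B.map some)) (ssRunAux k s' t (B.map some)) := by
  induction B with
  | nil => intro s s' t h _ _; exact h
  | cons b B ih =>
    intro s s' t h hs hs'
    exact ih (h.step hk hs hs' b) (hs.step hk b) (hs'.step hk b)

end Transition

/-- The tables of neighboring streams are related, up to a relabeling of the recencies in the
second run. -/
theorem exists_neighboring_ssRun {k : ℕ} (hk : 1 ≤ k) (A B : List α) (x : α) :
    ∃ s', (ssRun k ((A ++ B).map some)).tracked = s'.tracked ∧
      (ssRun k ((A ++ B).map some)).count = s'.count ∧
      Neighboring k (ssRun k ((A ++ x :: B).map some)) s' := by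
  have hinit : SSState.WF k 1 (⟨∅, fun _ => 0, fun _ => 0⟩ : SSState α) := by
    constructor <;> simp
  have hA := ssRunAux_wf hk A hinit
  have hlt : ∀ a, (ssRunAux k ⟨∅, fun _ => 0, fun _ => 0⟩ 1 (A.map some)).recency a <
      1 + A.length := by
    have := ssRunAux_recency_lt (k := k) (A.map some)
      (s := (⟨∅, fun _ => 0, fun _ => 0⟩ : SSState α)) (t := 1) (by simp)
    simpa using this
  simp only [ssRun, List.map_append, List.map_cons, ssRunAux_append, List.length_map, ssRunAux]
  generalize ssRunAux k ⟨∅, fun _ => 0, fun _ => 0⟩ 1 (A.map some) = s at hA hlt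
  generalize 1 + A.length = t at hA hlt
  have hdelay := ssRunAux_succ_time (k := k) hlt (B.map some)
  have hA' : s.WF k (t + 1) :=
    ⟨hA.card_le, hA.count_pos, fun a ha => (hA.recency_lt a ha).trans t.lt_succ_self,
      hA.recency_inj⟩
  exact ⟨ssRunAux k s (t + 1) (B.map some), hdelay.1.symm, hdelay.2.symm,
    (hA.neighboring_step hk x).run hk B (hA.step hk x) hA'⟩

/-- Two items cover each of the two differences of the tracked sets. -/
theorem Neighboring.exists_sdiff_subset {k : ℕ} {s s' : SSState α} (h : Neighboring k s s') :
    (∃ a b, s.tracked \ s'.tracked ⊆ {a, b}) ∧ ∃ a b, s'.tracked \ s.tracked ⊆ {a, b} := by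
  simp only [Finset.subset_iff, Finset.mem_sdiff, Finset.mem_insert, Finset.mem_singleton]
  cases h with
  | offByOne x h => exact ⟨⟨x, x, by grind +splitImp [h.mem_iff]⟩, ⟨x, x, by grind +splitImp [h.mem_iff]⟩⟩
  | extraItem x h => exact ⟨⟨x, x, by grind +splitImp [h.mem_iff]⟩, ⟨x, x, by grind +splitImp [h.mem_iff]⟩⟩
  | victimSwapped x y h =>
    exact ⟨⟨x, x, by grind +splitImp [h.mem_iff, h.not_mem']⟩, ⟨y, y, by grind +splitImp [h.mem_iff, h.not_mem]⟩⟩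
  | offByOneSwapped x w y h =>
    exact ⟨⟨w, w, by grind +splitImp [h.mem_iff, h.not_mem_right]⟩,
      ⟨y, y, by grind +splitImp [h.mem_iff, h.not_mem_left]⟩⟩
  | doublySwapped x w y v h =>
    exact ⟨⟨x, w, by grind +splitImp [h.mem_iff, h.not_mem_y, h.not_mem_v]⟩,
      ⟨y, v, by grind +splitImp [h.mem_iff, h.not_mem_x, h.not_mem_w]⟩⟩

theorem Neighboring.count_le_of_not_mem_right {k : ℕ} {s s' : SSState α}
    (h : Neighboring k s s') {u a : α}
    (hu : u ∈ s.tracked) (hu' : u ∉ s'.tracked) (ha : a ∈ s'.tracked) :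
    s.count u ≤ s'.count a + 1 := by
  cases h with
  | offByOne x h => grind +splitImp [h.mem_iff]
  | extraItem x h => grind +splitImp [h.mem_iff, h.count_self]
  | victimSwapped x y h =>
    have := h.victim.count_le a ha
    grind +splitImp [h.mem_iff, h.not_mem', h.count_self]
  | offByOneSwapped x w y h =>
    have := h.count_min a ha
    grind +splitImp [h.mem_iff, h.not_mem_right, h.count_left]
  | doublySwapped x w y v h =>
    have := h.count_min a ha
    grind +splitImp [h.mem_iff, h.not_mem_y, h.not_mem_v, h.count_x, h.count_w]

theorem Neighboring.count_le_of_not_mem_left {k : ℕ} {s s' : SSState α}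
    (h : Neighboring k s s') {u a : α}
    (hu : u ∉ s.tracked) (hu' : u ∈ s'.tracked) (ha : a ∈ s'.tracked) :
    s'.count u ≤ s'.count a + 1 := by
  cases h with
  | offByOne x h => grind +splitImp [h.mem_iff]
  | extraItem x h => grind +splitImp [h.mem_iff]
  | victimSwapped x y h =>
    have := h.victim.count_le a ha
    grind +splitImp [h.mem_iff, h.not_mem]
  | offByOneSwapped x w y h =>
    have := h.count_min a ha
    grind +splitImp [h.mem_iff, h.not_mem_left]
  | doublySwapped x w y v h =>
    have := h.count_min a ha
    grind +splitImp [h.mem_iff, h.not_mem_x, h.not_mem_w, h.count_v]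

/-- At most one common item has different counters, and then they differ by one. -/
theorem Neighboring.exists_count_eq {k : ℕ} {s s' : SSState α} (h : Neighboring k s s') :
    ∃ x, ∀ a ∈ s.tracked, a ∈ s'.tracked →
      s.count a = s'.count a ∨ (a = x ∧ s.count a = s'.count a + 1) := by
  cases h with
  | offByOne x h => exact ⟨x, by grind +splitImp [h.count, h.count_self]⟩
  | extraItem x h => exact ⟨x, by grind +splitImp [h.count]⟩
  | victimSwapped x y h => exact ⟨x, by grind +splitImp [h.count, h.not_mem]⟩
  | offByOneSwapped x w y h => exact ⟨x, by grind +splitImp [h.count, h.count_self, h.not_mem_left]⟩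
  | doublySwapped x w y v h => exact ⟨x, by grind +splitImp [h.count, h.not_mem_x, h.not_mem_w]⟩

/-- **Stability of SpaceSaving under neighboring inputs.**  Let `(T, C)` and
`(T', C')` be the terminal outputs of SpaceSaving with capacity `k` on
neighboring streams `X = A ++ x :: B` and `X' = A ++ B` (`X'` is `X` with one
update removed).  Then `|T \ T'| ≤ 2` and `|T' \ T| ≤ 2` (so
`|T ∩ T'| ≥ k − 2` when the tables are full); every item of the symmetric
difference has counter value (in the run where it is tracked) at most
`min_{a ∈ T'} C'[a] + 1`; and there is at most one item `x ∈ T ∩ T'` with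
`C[x] = C'[x] + 1`, while `C[y] = C'[y]` for every other `y ∈ T ∩ T'`. -/
theorem ss_neighbor_stability {α : Type} [LinearOrder α] (k : ℕ) (hk : 1 ≤ k)
    (A B : List α) (x : α) (X X' : List α)
    (hX : X = A ++ x :: B) (hX' : X' = A ++ B) :
    (((ssRun k (X.map some)).tracked \ (ssRun k (X'.map some)).tracked).card ≤ 2 ∧
      ((ssRun k (X'.map some)).tracked \ (ssRun k (X.map some)).tracked).card ≤ 2) ∧
    ((ssRun k (X.map some)).tracked.card = k → (ssRun k (X'.map some)).tracked.card = k →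
      k - 2 ≤ ((ssRun k (X.map some)).tracked ∩ (ssRun k (X'.map some)).tracked).card) ∧
    (∀ u ∈ (ssRun k (X.map some)).tracked \ (ssRun k (X'.map some)).tracked,
      ∀ a ∈ (ssRun k (X'.map some)).tracked,
        (ssRun k (X.map some)).count u ≤ (ssRun k (X'.map some)).count a + 1) ∧
    (∀ u ∈ (ssRun k (X'.map some)).tracked \ (ssRun k (X.map some)).tracked,
      ∀ a ∈ (ssRun k (X'.map some)).tracked,
        (ssRun k (X'.map some)).count u ≤ (ssRun k (X'.map some)).count a + 1) ∧
    (∀ y ∈ (ssRun k (X.map some)).tracked ∩ (ssRun k (X'.map some)).tracked,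
      (ssRun k (X.map some)).count y = (ssRun k (X'.map some)).count y ∨
      (ssRun k (X.map some)).count y = (ssRun k (X'.map some)).count y + 1) ∧
    (∀ y z : α,
      y ∈ (ssRun k (X.map some)).tracked ∩ (ssRun k (X'.map some)).tracked →
      z ∈ (ssRun k (X.map some)).tracked ∩ (ssRun k (X'.map some)).tracked →
      (ssRun k (X.map some)).count y = (ssRun k (X'.map some)).count y + 1 →
      (ssRun k (X.map some)).count z = (ssRun k (X'.map some)).count z + 1 → y = z) := by
  subst hX hX'
  obtain ⟨s', htracked, hcount, h⟩ := exists_neighboring_ssRun hk A B x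
  rw [htracked, hcount]
  generalize ssRun k ((A ++ x :: B).map some) = s at h
  obtain ⟨⟨a, b, hab⟩, c, d, hcd⟩ := h.exists_sdiff_subset
  have hleft : (s.tracked \ s'.tracked).card ≤ 2 :=
    (Finset.card_le_card hab).trans Finset.card_le_two
  have hright : (s'.tracked \ s.tracked).card ≤ 2 :=
    (Finset.card_le_card hcd).trans Finset.card_le_two
  obtain ⟨p, hp⟩ := h.exists_count_eq
  refine ⟨⟨hleft, hright⟩, ?_, ?_, ?_, ?_, ?_⟩
  · intro hk₁ _
    have := Finset.card_sdiff_add_card_inter s.tracked s'.tracked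
    omega
  · intro u hu a ha
    rw [Finset.mem_sdiff] at hu
    exact h.count_le_of_not_mem_right hu.1 hu.2 ha
  · intro u hu a ha
    rw [Finset.mem_sdiff] at hu
    exact h.count_le_of_not_mem_left hu.2 hu.1 ha
  · grind
  · grind
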